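/- For the weight a = (3,5,6) (the weight of the Q₁₂-singularity), there exist 3×3 matrices C and D with non-negative integer entries such that |det D| = 1, B_a = C·D, (3,5,6) = (1,1,1)·D, and f_C has an isolated critical point at the origin of ℂ³ (all partial derivatives of f_C vanish at 0, and there is a punctured neighborhood of 0 containing no critical point of f_C); moreover any such C satisfies |det C| = 15. -/

import Mathlib

open Matrix BigOperators

noncomputable section

/-- `f_C(x,y,z) = Σ_{i=1}^{3} x^{c_{i1}} y^{c_{i2}} z^{c_{i3}}` for a 3×3 matrix `C`
with non-negative integer entries. -/
def fC (C : Matrix (Fin 3) (Fin 3) ℕ) : (Fin 3 → ℂ) → ℂ :=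
  fun v => ∑ i : Fin 3, ∏ j : Fin 3, v j ^ C i j

/-- `φ_D(u₁,u₂,u₃) = (u₁^{d_{i1}} u₂^{d_{i2}} u₃^{d_{i3}})_{i=1}^{3}`. -/
def phiD (D : Matrix (Fin 3) (Fin 3) ℕ) : (Fin 3 → ℂ) → (Fin 3 → ℂ) :=
  fun u i => ∏ j : Fin 3, u j ^ D i j

/-- The matrix `B_a` with rows `(a₁+1,a₂,a₃)`, `(a₁,a₂+1,a₃)`, `(a₁,a₂,a₃+1)`. -/
def Bmat (a : Fin 3 → ℕ) : Matrix (Fin 3) (Fin 3) ℕ :=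
  fun i j => a j + if i = j then 1 else 0

/-- `G_a(u₁,u₂,u₃) = u₁^{a₁+1}u₂^{a₂}u₃^{a₃} + u₁^{a₁}u₂^{a₂+1}u₃^{a₃} + u₁^{a₁}u₂^{a₂}u₃^{a₃+1}`. -/
def Ga (a : Fin 3 → ℕ) : (Fin 3 → ℂ) → ℂ :=
  fun u => u 0 ^ (a 0 + 1) * u 1 ^ a 1 * u 2 ^ a 2
         + u 0 ^ a 0 * u 1 ^ (a 1 + 1) * u 2 ^ a 2
         + u 0 ^ a 0 * u 1 ^ a 1 * u 2 ^ (a 2 + 1)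

/-- `H_a(u₁,u₂,u₃) = u₁^{a₁}u₂^{a₂}u₃^{a₃}`. -/
def Ha (a : Fin 3 → ℕ) : (Fin 3 → ℂ) → ℂ :=
  fun u => u 0 ^ a 0 * u 1 ^ a 1 * u 2 ^ a 2

/-- Determinant of a matrix of natural numbers, computed over `ℤ`. -/
def detZ (M : Matrix (Fin 3) (Fin 3) ℕ) : ℤ :=
  (M.map (fun n : ℕ => (n : ℤ))).det

/-- `f` has an isolated critical point at the origin of `ℂ³`: the derivative of `f`
vanishes at `0`, and there is a punctured neighborhood of `0` containing no critical
point of `f`. -/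
def IsolatedCriticalAtZero (f : (Fin 3 → ℂ) → ℂ) : Prop :=
  fderiv ℂ f 0 = 0 ∧
  ∃ ε : ℝ, ε > 0 ∧ ∀ p : Fin 3 → ℂ, p ≠ 0 → ‖p‖ < ε → fderiv ℂ f p ≠ 0

theorem fC_hasFDerivAt (p : Fin 3 → ℂ) :
    HasFDerivAt (fC !![1,0,3;0,3,0;2,0,1])
      ((p 2 ^ 3 + 2 * p 0 * p 2) • (ContinuousLinearMap.proj (R := ℂ) (φ := fun _ : Fin 3 => ℂ) 0)
      + (3 * p 1 ^ 2) • (ContinuousLinearMap.proj (R := ℂ) (φ := fun _ : Fin 3 => ℂ) 1)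
      + (3 * p 0 * p 2 ^ 2 + p 0 ^ 2) •
        (ContinuousLinearMap.proj (R := ℂ) (φ := fun _ : Fin 3 => ℂ) 2)) p := by
  have e : fC !![1,0,3;0,3,0;2,0,1] =
      fun v => v 0 * v 2 ^ 3 + v 1 ^ 3 + v 0 ^ 2 * v 2 := by
    funext v
    simp [fC, Fin.sum_univ_three, Fin.prod_univ_three]
  rw [e]
  have h0 := hasFDerivAt_apply (𝕜 := ℂ) (F' := fun _ : Fin 3 => ℂ) 0 p
  have h1 := hasFDerivAt_apply (𝕜 := ℂ) (F' := fun _ : Fin 3 => ℂ) 1 p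
  have h2 := hasFDerivAt_apply (𝕜 := ℂ) (F' := fun _ : Fin 3 => ℂ) 2 p
  refine (((h0.mul (h2.pow 3)).add (h1.pow 3)).add ((h0.pow 2).mul h2)).congr_fderiv ?_
  ext v
  simp
  ring

theorem fC_isolated : IsolatedCriticalAtZero (fC !![1,0,3;0,3,0;2,0,1]) := by
  refine ⟨?_, 1, one_pos, ?_⟩
  · rw [(fC_hasFDerivAt 0).fderiv]
    ext v
    simp
  · intro p hp _ h
    rw [(fC_hasFDerivAt p).fderiv] at h
    have a0 := congrArg (fun L => L (Pi.single 0 1)) h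
    have a1 := congrArg (fun L => L (Pi.single 1 1)) h
    have a2 := congrArg (fun L => L (Pi.single 2 1)) h
    simp at a0 a1 a2
    apply hp
    have hz : p 2 = 0 := by
      have : p 0 * (3 * p 2 ^ 2 + p 0) = 0 := by linear_combination a2
      rcases mul_eq_zero.1 this with h | h
      · rw [h] at a0
        simpa using a0
      · have : p 2 ^ 3 = 0 := by
          linear_combination (-1/5) * a0 + (2/5) * p 2 * h
        simpa using this
    have hx : p 0 = 0 := by
      rw [hz] at a2
      simpa using a2
    funext i
    fin_cases i
    · exact hx
    · exact a1
    · exact hz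

theorem stmt_17 :
    (∃ C D : Matrix (Fin 3) (Fin 3) ℕ,
      |detZ D| = 1 ∧
      Bmat ![3, 5, 6] = C * D ∧
      (∀ j, (∑ i : Fin 3, D i j) = ![3, 5, 6] j) ∧
      IsolatedCriticalAtZero (fC C)) ∧
    (∀ C D : Matrix (Fin 3) (Fin 3) ℕ,
      |detZ D| = 1 →
      Bmat ![3, 5, 6] = C * D →
      (∀ j, (∑ i : Fin 3, D i j) = ![3, 5, 6] j) →
      IsolatedCriticalAtZero (fC C) →
      |detZ C| = 15) := by
  refine ⟨⟨!![1,0,3;0,3,0;2,0,1], !![1,2,3;1,2,2;1,1,1], ?_, ?_, ?_, fC_isolated⟩, ?_⟩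
  · simp [detZ, Matrix.det_fin_three]
  · ext i j
    fin_cases i <;> fin_cases j <;> simp [Bmat, Matrix.mul_apply, Fin.sum_univ_three]
  · intro j
    fin_cases j <;> simp [Fin.sum_univ_three]
  · intro C D hD hB _ _
    have hm : detZ (C * D) = detZ C * detZ D := by
      unfold detZ
      rw [← Matrix.det_mul]
      have e : (C * D).map (fun n : ℕ => (n : ℤ)) =
          C.map (fun n : ℕ => (n : ℤ)) * D.map (fun n : ℕ => (n : ℤ)) := by
        ext i j
        simp [Matrix.mul_apply]
      rw [e]
    have hb : detZ (Bmat ![3, 5, 6]) = 15 := by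
      simp [detZ, Bmat, Matrix.det_fin_three]
    rw [← hB, hb] at hm
    have := congrArg abs hm
    rw [abs_mul, hD] at this
    simpa using this.symm
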